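/- arXiv:math/0310216 — 2 statements merged into one kernel-verified Lean document; each statement's English description precedes it below -/
import Mathlib

section
/- Let p, q ≥ 2 be coprime integers. The Laurent polynomial Θ_{p,q}(s₁, s₂, (s₁s₂)^{−1}) ∈ ℤ[t₁^{±1}, t₂^{±1}] (where t_i = s_i²) has degree exactly (p−1)(q−1) in t₁, i.e. the maximal exponent of t₁ occurring with nonzero coefficient is (p−1)(q−1). -/
/-- `Δ_{p,q}(s) = ((s^{pq} − s^{−pq})(s − s^{−1})) / ((s^p − s^{−p})(s^q − s^{−q}))`,
the Alexander polynomial of the `(p,q)` torus knot evaluated at `t = s²`. -/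
noncomputable def torusDelta {F : Type*} [Field F] (p q : ℕ) (s : F) : F :=
  ((s ^ (p * q) - s⁻¹ ^ (p * q)) * (s - s⁻¹)) / ((s ^ p - s⁻¹ ^ p) * (s ^ q - s⁻¹ ^ q))

/-- `φ_{p,q}(s) = (s^p + s^{−p})/(s^p − s^{−p}) − q·(s^{pq} + s^{−pq})/(s^{pq} − s^{−pq})`. -/
noncomputable def torusPhi {F : Type*} [Field F] (p q : ℕ) (s : F) : F :=
  (s ^ p + s⁻¹ ^ p) / (s ^ p - s⁻¹ ^ p) -
    (q : F) * ((s ^ (p * q) + s⁻¹ ^ (p * q)) / (s ^ (p * q) - s⁻¹ ^ (p * q)))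

/-- `ψ_{p,q}(s) = Δ_{p,q}(s)·φ_{p,q}(s)`. -/
noncomputable def torusPsi {F : Type*} [Field F] (p q : ℕ) (s : F) : F :=
  torusDelta p q s * torusPhi p q s

/-- The 2-loop polynomial of the torus knot `T(p,q)`:
`Θ_{p,q}(s₁,s₂,s₃) = −(1/4)·Σ_{(i,j,k)} ψ_{p,q}(s_i)·ψ_{q,p}(s_j)·Δ_{p,q}(s_k)`,
the sum running over all six permutations `(i,j,k)` of `(1,2,3)`. -/
noncomputable def torusTheta {F : Type*} [Field F] (p q : ℕ) (s₁ s₂ s₃ : F) : F :=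
  -(1/4) * (torusPsi p q s₁ * torusPsi q p s₂ * torusDelta p q s₃
    + torusPsi p q s₁ * torusPsi q p s₃ * torusDelta p q s₂
    + torusPsi p q s₂ * torusPsi q p s₁ * torusDelta p q s₃
    + torusPsi p q s₂ * torusPsi q p s₃ * torusDelta p q s₁
    + torusPsi p q s₃ * torusPsi q p s₁ * torusDelta p q s₂
    + torusPsi p q s₃ * torusPsi q p s₂ * torusDelta p q s₁)

/-- The reduced 2-loop polynomial of the torus knot `T(p,q)`:
`Θ̂_{p,q}(s) = ψ_{p,q}(s)·ψ_{q,p}(s) / (2(s − s^{−1})²)`. -/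
noncomputable def torusThetaHat {F : Type*} [Field F] (p q : ℕ) (s : F) : F :=
  torusPsi p q s * torusPsi q p s / (2 * (s - s⁻¹) ^ 2)

/-!
Write `x = t₁`, `y = t₂` and `d = (p-1)(q-1)`. In terms of the `q`-integers
`[n]_x = (x^n - 1)/(x - 1)` one has `Θ = (xy)^{-d} N(x, y) / D(x, y)`, with `N` a polynomial and `D`
the product of `[q]_x [q]_y [q]_{xy}` and `[p]_x [p]_y [p]_{xy}`. If `x^q = 1` then `y^q = (xy)^q`,
and if `(xy)^q = 1` then `x^q` and `y^q` are inverse to each other; this makes the first factor of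
`D` divide `N`. By symmetry so does the second, and the two factors are coprime. Hence `N = W D` for
a polynomial `W`, and `W(0, 0) = N(0, 0)` is the genus `d/2`.

Since `Δ` is even and `φ` is odd under `s ↦ s⁻¹`, `Θ` is unchanged when all `s_i` are inverted, so
`Θ = (xy)^d W(x⁻¹, y⁻¹)`. No exponent of `x` exceeds `d`, and `(xy)^d` has coefficient `d/2 ≠ 0`.
-/

/-- The `q`-integer `[n]_x = 1 + x + ⋯ + x^{n-1}`, in which the Alexander polynomial of a torus knot
becomes `[pq]_x / ([p]_x [q]_x)`. -/
def qInt {A : Type*} [Semiring A] (n : ℕ) (x : A) : A :=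
  ∑ i ∈ Finset.range n, x ^ i

/-- The sum `[0]_x + [1]_x + ⋯ + [n-1]_x` of the first `n` `q`-integers. It is the polynomial
quotient `([n]_x - n) / (x - 1)`, through which `torusPhi` is expressed without poles at `x = 1`. -/
def qIntSum {A : Type*} [Semiring A] (n : ℕ) (x : A) : A :=
  ∑ k ∈ Finset.range n, qInt k x

section Semiring

variable {A B G : Type*} [Semiring A] [Semiring B] [FunLike G A B] [RingHomClass G A B]

lemma map_qInt (f : G) (n : ℕ) (x : A) : f (qInt n x) = qInt n (f x) := by
  simp [qInt]

lemma map_qIntSum (f : G) (n : ℕ) (x : A) : f (qIntSum n x) = qIntSum n (f x) := by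
  simp [qIntSum, map_qInt]

lemma qInt_one (x : A) : qInt 1 x = 1 := by
  simp [qInt]

lemma qInt_add (m n : ℕ) (x : A) : qInt (m + n) x = qInt m x + x ^ m * qInt n x := by
  simp [qInt, Finset.sum_range_add, Finset.mul_sum, pow_add]

lemma qInt_succ (n : ℕ) (x : A) : qInt (n + 1) x = qInt n x + x ^ n :=
  Finset.sum_range_succ _ _

lemma qIntSum_succ (n : ℕ) (x : A) : qIntSum (n + 1) x = qIntSum n x + qInt n x :=
  Finset.sum_range_succ _ _

lemma qInt_mul (m n : ℕ) (x : A) : qInt (m * n) x = qInt m x * qInt n (x ^ m) := by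
  induction n with
  | zero => simp [qInt]
  | succ n ih =>
    rw [qInt_succ n, mul_add (qInt m x), ← ih, Nat.mul_succ, qInt_add, ← pow_mul]
    congr 1
    simp only [qInt, Finset.mul_sum, Finset.sum_mul, ← pow_add, add_comm]

lemma qInt_zero_right {n : ℕ} (hn : 0 < n) : qInt n (0 : A) = 1 := by
  obtain ⟨n, rfl⟩ := Nat.exists_eq_add_of_lt hn
  simp [qInt, Finset.sum_range_succ']

lemma qIntSum_zero_right (n : ℕ) : qIntSum (n + 1) (0 : A) = n := by
  rw [qIntSum, Finset.sum_range_succ',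
    Finset.sum_congr rfl fun k _ ↦ qInt_zero_right (A := A) k.succ_pos]
  simp [qInt]

end Semiring

section CommRing

variable {A : Type*} [CommRing A]

lemma qInt_mul_sub_one (n : ℕ) (x : A) : qInt n x * (x - 1) = x ^ n - 1 :=
  geom_sum_mul x n

lemma qIntSum_mul_sub_one (n : ℕ) (x : A) : qIntSum n x * (x - 1) = qInt n x - n := by
  induction n with
  | zero => simp [qIntSum, qInt]
  | succ n ih =>
    rw [qIntSum_succ, qInt_succ]
    push_cast
    linear_combination ih + qInt_mul_sub_one n x

lemma isCoprime_qInt {m n : ℕ} (h : m.Coprime n) (x : A) : IsCoprime (qInt m x) (qInt n x) := by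
  induction m, n using Nat.gcd.induction with
  | H0 n =>
    rw [(Nat.coprime_zero_left n).1 h, qInt_one]
    exact isCoprime_one_right
  | H1 m n _ ih =>
    have h' : (n % m).Coprime m := by rwa [Nat.Coprime, ← Nat.gcd_rec]
    rw [← Nat.mod_add_div n m, qInt_add, qInt_mul, mul_left_comm]
    exact (ih h').symm.add_mul_left_right _

lemma sub_dvd_qInt_sub (n : ℕ) (x y : A) : x - y ∣ qInt n x - qInt n y := by
  rw [qInt, qInt, ← Finset.sum_sub_distrib]
  exact Finset.dvd_sum fun i _ ↦ sub_dvd_pow_sub_pow x y i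

lemma sub_dvd_qIntSum_sub (n : ℕ) (x y : A) : x - y ∣ qIntSum n x - qIntSum n y := by
  rw [qIntSum, qIntSum, ← Finset.sum_sub_distrib]
  exact Finset.dvd_sum fun k _ ↦ sub_dvd_qInt_sub k x y

lemma sub_dvd_qIntSum_mul_qInt_sub (n : ℕ) (x y : A) :
    x - y ∣ qIntSum n x * qInt n y - qIntSum n y * qInt n x := by
  have h := ((sub_dvd_qIntSum_sub n x y).mul_right (qInt n y)).sub
    ((sub_dvd_qInt_sub n x y).mul_left (qIntSum n y))
  convert h using 1
  ring

lemma pow_mul_qInt_of_mul_eq_one {x y : A} (h : x * y = 1) (n : ℕ) :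
    x ^ n * qInt (n + 1) y = qInt (n + 1) x := by
  induction n with
  | zero => simp [qInt]
  | succ n ih =>
    have hpow : x ^ (n + 1) * y ^ (n + 1) = 1 := by rw [← mul_pow, h, one_pow]
    rw [qInt_succ (n + 1) y, add_comm (n + 1) 1, qInt_add 1, qInt_one]
    linear_combination x * ih + hpow

lemma pow_mul_qIntSum_of_mul_eq_one {x y : A} (h : x * y = 1) (n : ℕ) :
    x ^ n * qIntSum (n + 1) y = n * qInt (n + 1) x - qIntSum (n + 1) x := by
  induction n with
  | zero => simp [qInt, qIntSum]
  | succ n ih =>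
    have hrefl := pow_mul_qInt_of_mul_eq_one h n
    have hsum := qIntSum_mul_sub_one (n + 1) x
    rw [qIntSum_succ (n + 1) y, qIntSum_succ (n + 1) x, add_comm (n + 1) 1, qInt_add 1, qInt_one]
    push_cast at hsum ⊢
    linear_combination x * ih + x * hrefl - hsum

lemma qIntSum_mul_qInt_add_of_mul_eq_one {x y : A} (h : x * y = 1) {n : ℕ} (hn : 0 < n) :
    qIntSum n x * qInt n y + qIntSum n y * qInt n x = (n - 1) * (qInt n x * qInt n y) := by
  obtain ⟨n, rfl⟩ := Nat.exists_eq_succ_of_ne_zero hn.ne'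
  have hunit : IsUnit (x ^ n) := (IsUnit.of_mul_eq_one y h).pow n
  refine hunit.mul_left_cancel ?_
  have hInt := pow_mul_qInt_of_mul_eq_one h n
  have hSum := pow_mul_qIntSum_of_mul_eq_one h n
  push_cast
  linear_combination (qIntSum (n + 1) x - n * qInt (n + 1) x) * hInt + qInt (n + 1) x * hSum

lemma mul_sub_one_dvd_qIntSum_mul_qInt_add (x y : A) {n : ℕ} (hn : 0 < n) :
    x * y - 1 ∣ qIntSum n x * qInt n y + qIntSum n y * qInt n x -
      (n - 1) * (qInt n x * qInt n y) := by
  rw [← Ideal.Quotient.eq_zero_iff_dvd]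
  set π := Ideal.Quotient.mk (Ideal.span {x * y - 1})
  have h : π x * π y = 1 := by
    rw [← map_mul, ← sub_eq_zero, ← map_one π, ← map_sub, Ideal.Quotient.eq_zero_iff_dvd]
  simp [map_qInt, map_qIntSum, qIntSum_mul_qInt_add_of_mul_eq_one h hn]

end CommRing

/-- The genus `(p-1)(q-1)/2` of the torus knot `T(p,q)`, in truncated natural-number arithmetic. It
turns out to be the coefficient of `(t₁t₂)^{(p-1)(q-1)}` in the 2-loop polynomial. -/
def torusGenus (p q : ℕ) : ℕ :=
  (p - 1) * (q - 1) / 2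

lemma two_mul_torusGenus {p q : ℕ} (hpq : p.Coprime q) :
    2 * torusGenus p q = (p - 1) * (q - 1) := by
  refine Nat.mul_div_cancel' ?_
  rw [Nat.prime_two.dvd_mul]
  by_contra! h
  exact Nat.not_coprime_of_dvd_of_dvd one_lt_two (by omega : 2 ∣ p) (by omega : 2 ∣ q) hpq

lemma torusGenus_pos {p q : ℕ} (hp : 2 ≤ p) (hq : 2 ≤ q) (hpq : p.Coprime q) :
    0 < torusGenus p q := by
  have hpos : 0 < (p - 1) * (q - 1) := Nat.mul_pos (by omega) (by omega)
  have htwo := two_mul_torusGenus hpq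
  omega

lemma torusGenus_comm (p q : ℕ) : torusGenus p q = torusGenus q p := by
  rw [torusGenus, torusGenus, mul_comm]

lemma cast_two_mul_torusGenus {A : Type*} [CommRing A] {p q : ℕ} (hp : 0 < p) (hq : 0 < q)
    (hpq : p.Coprime q) : 2 * (torusGenus p q : A) = (p - 1) * (q - 1) := by
  rw [← Nat.cast_pred hp, ← Nat.cast_pred hq, ← Nat.cast_mul, ← two_mul_torusGenus hpq]
  push_cast
  rfl

section Numerator

variable {A B G : Type*} [CommRing A] [CommRing B] [FunLike G A B] [RingHomClass G A B]

/-- The numerator of `(ψ_{p,q}(s) + (q-1) Δ_{p,q}(s)) / 2` over the denominator `[p]_x [q]_x`, where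
`x = s²` and a power of `s` is dropped. The numerator of `Δ_{p,q}(s)` is then `[pq]_x`. -/
def psiNumerator (p q : ℕ) (x : A) : A :=
  qIntSum q (x ^ p) * qInt p x

lemma map_psiNumerator (f : G) (p q : ℕ) (x : A) :
    f (psiNumerator p q x) = psiNumerator p q (f x) := by
  simp [psiNumerator, map_qInt, map_qIntSum]

lemma psiNumerator_zero {p q : ℕ} (hp : 0 < p) (hq : 0 < q) :
    psiNumerator p q (0 : A) = q - 1 := by
  obtain ⟨q, rfl⟩ := Nat.exists_eq_succ_of_ne_zero hq.ne'
  simp [psiNumerator, zero_pow hp.ne', qInt_zero_right hp, qIntSum_zero_right]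

/-- The product `[n]_x [n]_y [n]_{xy}`. For `n = p` and `n = q` these are the two factors of the
denominator of the 2-loop polynomial. -/
def qIntTriple (n : ℕ) (x y : A) : A :=
  qInt n x * qInt n y * qInt n (x * y)

lemma map_qIntTriple (f : G) (n : ℕ) (x y : A) :
    f (qIntTriple n x y) = qIntTriple n (f x) (f y) := by
  simp [qIntTriple, map_qInt]

/-- The numerator of `Θ_{p,q}(s₁, s₂, (s₁s₂)⁻¹)` over the common denominator
`[p]_x [p]_y [p]_{xy} [q]_x [q]_y [q]_{xy}`, where `x = s₁²`, `y = s₂²` and a power of `xy` is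
dropped. The terms are grouped by the argument of `ψ_{p,q}`. -/
def thetaNumerator (p q : ℕ) (x y : A) : A :=
  torusGenus p q * (qInt (p * q) x * qInt (p * q) y * qInt (p * q) (x * y))
  - (q - 1) * (qInt (p * q) x * qInt (p * q) y * psiNumerator q p (x * y))
  - psiNumerator p q x *
      (psiNumerator q p y * qInt (p * q) (x * y) - psiNumerator q p (x * y) * qInt (p * q) y)
  - psiNumerator p q y *
      (psiNumerator q p x * qInt (p * q) (x * y) - psiNumerator q p (x * y) * qInt (p * q) x)
  + psiNumerator p q (x * y) *
      (psiNumerator q p x * qInt (p * q) y + psiNumerator q p y * qInt (p * q) x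
        - (p - 1) * (qInt (p * q) x * qInt (p * q) y))

lemma map_thetaNumerator (f : G) (p q : ℕ) (x y : A) :
    f (thetaNumerator p q x y) = thetaNumerator p q (f x) (f y) := by
  simp [thetaNumerator, map_qInt, map_psiNumerator]

lemma thetaNumerator_comm (p q : ℕ) (x y : A) :
    thetaNumerator p q x y = thetaNumerator q p x y := by
  unfold thetaNumerator
  rw [mul_comm q p, torusGenus_comm q p]
  ring

lemma thetaNumerator_zero {p q : ℕ} (hp : 0 < p) (hq : 0 < q) :
    thetaNumerator p q (0 : A) 0 = torusGenus p q := by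
  simp only [thetaNumerator, mul_zero, psiNumerator_zero hp hq, psiNumerator_zero hq hp,
    qInt_zero_right (Nat.mul_pos hp hq)]
  ring

lemma qInt_dvd_qIntSum_mul_qInt_sub (p q : ℕ) (x y : A) :
    qInt q x ∣ qIntSum p (y ^ q) * qInt p ((x * y) ^ q) -
      qIntSum p ((x * y) ^ q) * qInt p (y ^ q) := by
  have h : qInt q x ∣ y ^ q - (x * y) ^ q :=
    ⟨-(x - 1) * y ^ q, by linear_combination y ^ q * qInt_mul_sub_one q x⟩
  exact h.trans (sub_dvd_qIntSum_mul_qInt_sub p _ _)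

lemma qInt_mul_dvd_qIntSum_mul_qInt_add {p : ℕ} (hp : 0 < p) (q : ℕ) (x y : A) :
    qInt q (x * y) ∣ qIntSum p (x ^ q) * qInt p (y ^ q) + qIntSum p (y ^ q) * qInt p (x ^ q) -
      (p - 1) * (qInt p (x ^ q) * qInt p (y ^ q)) := by
  have h : qInt q (x * y) ∣ x ^ q * y ^ q - 1 :=
    ⟨x * y - 1, by rw [qInt_mul_sub_one, mul_pow]⟩
  exact h.trans (mul_sub_one_dvd_qIntSum_mul_qInt_add _ _ hp)

lemma qIntTriple_dvd_thetaNumerator {p : ℕ} (hp : 0 < p) (q : ℕ) (x y : A) :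
    qIntTriple q x y ∣ thetaNumerator p q x y := by
  obtain ⟨a, ha⟩ := qInt_dvd_qIntSum_mul_qInt_sub p q x y
  obtain ⟨b, hb⟩ := qInt_dvd_qIntSum_mul_qInt_sub p q y x
  obtain ⟨c, hc⟩ := qInt_mul_dvd_qIntSum_mul_qInt_add hp q x y
  rw [mul_comm y x] at hb
  have hpq : ∀ z : A, qInt (p * q) z = qInt q z * qInt p (z ^ q) := fun z ↦ by
    rw [mul_comm, qInt_mul]
  have hpsi : ∀ z : A, psiNumerator q p z = qIntSum p (z ^ q) * qInt q z := fun _ ↦ rfl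
  refine ⟨torusGenus p q * (qInt p (x ^ q) * qInt p (y ^ q) * qInt p ((x * y) ^ q))
    - (q - 1) * (qInt p (x ^ q) * qInt p (y ^ q) * qIntSum p ((x * y) ^ q))
    - psiNumerator p q x * a - psiNumerator p q y * b + psiNumerator p q (x * y) * c, ?_⟩
  simp only [thetaNumerator, qIntTriple, hpq, hpsi]
  linear_combination
    (-psiNumerator p q x * qInt q y * qInt q (x * y)) * ha
    - psiNumerator p q y * qInt q x * qInt q (x * y) * hb
    + psiNumerator p q (x * y) * qInt q x * qInt q y * hc

end Numerator

section MvPolynomial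

open MvPolynomial

variable {σ R : Type*} [CommRing R]

lemma algebraMap_pow_ne_one [Nontrivial R] {K : Type*} [CommRing K] [Algebra (MvPolynomial σ R) K]
    [FaithfulSMul (MvPolynomial σ R) K] {f : MvPolynomial σ R} (hf : constantCoeff f = 0) {n : ℕ}
    (hn : n ≠ 0) : algebraMap (MvPolynomial σ R) K f ^ n ≠ 1 := by
  intro h
  rw [← map_pow, FaithfulSMul.algebraMap_eq_one_iff] at h
  simpa [hf, hn] using congrArg constantCoeff h

variable [IsDomain R]

lemma algHom_eq_self_of_dvd {d f : MvPolynomial σ R} {i : σ} (hf : f ≠ 0) (hi : i ∉ f.vars)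
    (hdf : d ∣ f) (φ : MvPolynomial σ R →ₐ[R] MvPolynomial σ R) (hφ : ∀ j ≠ i, φ (X j) = X j) :
    φ d = d := by
  obtain ⟨e, rfl⟩ := hdf
  have hid : i ∉ d.vars := by
    rw [mem_vars_iff_degreeOf_ne_zero, not_not] at hi ⊢
    rw [degreeOf_mul_eq (left_ne_zero_of_mul hf) (right_ne_zero_of_mul hf)] at hi
    exact (Nat.add_eq_zero_iff.1 hi).1
  refine hom_congr_vars (f₁ := (φ : MvPolynomial σ R →+* MvPolynomial σ R)) (f₂ := RingHom.id _)
    ?_ (fun j hj _ ↦ hφ j (ne_of_mem_of_not_mem hj hid)) rfl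
  ext r
  simp

lemma isRelPrime_of_notMem_vars {f g : MvPolynomial σ R} {i : σ} (hf : f ≠ 0) (hi : i ∉ f.vars)
    (φ : MvPolynomial σ R →ₐ[R] MvPolynomial σ R) (hφ : ∀ j ≠ i, φ (X j) = X j)
    (hg : IsUnit (φ g)) : IsRelPrime f g := fun _ hdf hdg ↦
  isUnit_of_dvd_unit (algHom_eq_self_of_dvd hf hi hdf φ hφ ▸ map_dvd φ hdg) hg

lemma isRelPrime_qInt_X {i j : σ} (hij : i ≠ j) {m n : ℕ} (hm : 0 < m) (hn : 0 < n)
    (z : MvPolynomial σ R) : IsRelPrime (qInt m (X j)) (qInt n (X i * z)) := by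
  classical
  have hne : qInt m (X j : MvPolynomial σ R) ≠ 0 := fun h ↦ by
    simpa [map_qInt, qInt_zero_right hm] using congrArg constantCoeff h
  have hvars : i ∉ (qInt m (X j : MvPolynomial σ R)).vars := fun hi ↦ by
    obtain ⟨k, -, hk⟩ := Finset.mem_biUnion.1 (vars_sum_subset _ _ hi)
    exact hij (by simpa using vars_pow _ _ hk)
  let φ : MvPolynomial σ R →ₐ[R] MvPolynomial σ R := aeval (Function.update X i 0)
  have hφ : φ (qInt n (X i * z)) = 1 := by simp [φ, map_qInt, qInt_zero_right hn]
  exact isRelPrime_of_notMem_vars hne hvars φ (fun k hk ↦ by simp [φ, hk]) (hφ ▸ isUnit_one)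

lemma isRelPrime_qIntTriple_X [UniqueFactorizationMonoid R] {i j : σ} (hij : i ≠ j) {m n : ℕ}
    (hm : 0 < m) (hn : 0 < n) (hmn : m.Coprime n) :
    IsRelPrime (qIntTriple m (X i : MvPolynomial σ R) (X j)) (qIntTriple n (X i) (X j)) := by
  have hself (z : MvPolynomial σ R) : IsRelPrime (qInt m z) (qInt n z) :=
    (isCoprime_qInt hmn z).isRelPrime
  have hvar {i j : σ} (hij : i ≠ j) {m n : ℕ} (hm : 0 < m) (hn : 0 < n) :
      IsRelPrime (qInt m (X i : MvPolynomial σ R)) (qInt n (X j)) := by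
    simpa using isRelPrime_qInt_X (R := R) hij.symm hm hn 1
  have hleft {m n : ℕ} (hm : 0 < m) (hn : 0 < n) :
      IsRelPrime (qInt m (X i : MvPolynomial σ R)) (qInt n (X i * X j)) :=
    mul_comm (X i) (X j : MvPolynomial σ R) ▸ isRelPrime_qInt_X hij.symm hm hn (X i)
  have hright {m n : ℕ} (hm : 0 < m) (hn : 0 < n) :
      IsRelPrime (qInt m (X j : MvPolynomial σ R)) (qInt n (X i * X j)) :=
    isRelPrime_qInt_X hij hm hn (X j)
  refine .mul_left (.mul_left ?_ ?_) ?_ <;> refine .mul_right (.mul_right ?_ ?_) ?_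
  exacts [hself _, hvar hij hm hn, hleft hm hn, hvar hij.symm hm hn, hself _, hright hm hn,
    (hleft hn hm).symm, (hright hn hm).symm, hself _]

lemma exists_mul_qIntTriple_eq_thetaNumerator {p q : ℕ} (hp : 0 < p) (hq : 0 < q)
    (hpq : p.Coprime q) :
    ∃ W : MvPolynomial (Fin 2) ℤ,
      W * (qIntTriple p (X 0) (X 1) * qIntTriple q (X 0) (X 1)) =
        thetaNumerator p q (X 0) (X 1) ∧
      constantCoeff W = torusGenus p q := by
  have hdvd : qIntTriple p (X 0 : MvPolynomial (Fin 2) ℤ) (X 1) ∣ thetaNumerator p q (X 0) (X 1) :=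
    thetaNumerator_comm q p (X 0 : MvPolynomial (Fin 2) ℤ) _ ▸
      qIntTriple_dvd_thetaNumerator hq p _ _
  obtain ⟨W, hW⟩ := (isRelPrime_qIntTriple_X zero_ne_one hp hq hpq).mul_dvd hdvd
    (qIntTriple_dvd_thetaNumerator hp q _ _)
  rw [mul_comm] at hW
  refine ⟨W, hW.symm, ?_⟩
  have hconst := congrArg constantCoeff hW
  simpa [map_thetaNumerator, map_qIntTriple, thetaNumerator_zero hp hq, qIntTriple, map_qInt,
    qInt_zero_right hp, qInt_zero_right hq] using hconst.symm

end MvPolynomial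

section Field

variable {F : Type*} [Field F]

lemma pow_sub_inv_pow {s : F} (hs : s ≠ 0) (n : ℕ) :
    s ^ n - s⁻¹ ^ n = s⁻¹ ^ n * ((s ^ 2) ^ n - 1) := by
  have hcancel : s⁻¹ ^ n * s ^ n = 1 := by rw [← mul_pow, inv_mul_cancel₀ hs, one_pow]
  linear_combination (-s ^ n) * hcancel

lemma pow_add_inv_pow {s : F} (hs : s ≠ 0) (n : ℕ) :
    s ^ n + s⁻¹ ^ n = s⁻¹ ^ n * ((s ^ 2) ^ n + 1) := by
  have hcancel : s⁻¹ ^ n * s ^ n = 1 := by rw [← mul_pow, inv_mul_cancel₀ hs, one_pow]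
  linear_combination (-s ^ n) * hcancel

lemma qInt_ne_zero_of_pow_ne_one {m n : ℕ} (hmn : m ∣ n) {x : F} (hx : x ^ n ≠ 1) :
    qInt m x ≠ 0 := by
  obtain ⟨k, rfl⟩ := hmn
  intro h
  refine hx ?_
  rw [pow_mul, eq_add_of_sub_eq (qInt_mul_sub_one m x).symm, h, zero_mul, zero_add, one_pow]

lemma qIntTriple_ne_zero_of_pow_ne_one {m n : ℕ} (hmn : m ∣ n) {x y : F} (hx : x ^ n ≠ 1)
    (hy : y ^ n ≠ 1) (hxy : (x * y) ^ n ≠ 1) : qIntTriple m x y ≠ 0 :=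
  mul_ne_zero (mul_ne_zero (qInt_ne_zero_of_pow_ne_one hmn hx) (qInt_ne_zero_of_pow_ne_one hmn hy))
    (qInt_ne_zero_of_pow_ne_one hmn hxy)

lemma torusDelta_inv (p q : ℕ) (s : F) : torusDelta p q s⁻¹ = torusDelta p q s := by
  rw [torusDelta, torusDelta, inv_inv]
  congr 1 <;> ring

lemma torusPhi_inv (p q : ℕ) (s : F) : torusPhi p q s⁻¹ = -torusPhi p q s := by
  rw [torusPhi, torusPhi, inv_inv, ← neg_sub (s ^ p), ← neg_sub (s ^ (p * q)), div_neg, div_neg]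
  ring

lemma torusPsi_inv (p q : ℕ) (s : F) : torusPsi p q s⁻¹ = -torusPsi p q s := by
  rw [torusPsi, torusPsi, torusDelta_inv, torusPhi_inv, mul_neg]

lemma torusTheta_inv (p q : ℕ) (s₁ s₂ s₃ : F) :
    torusTheta p q s₁⁻¹ s₂⁻¹ s₃⁻¹ = torusTheta p q s₁ s₂ s₃ := by
  simp only [torusTheta, torusPsi_inv, torusDelta_inv, neg_mul_neg]

lemma torusDelta_eq {p q : ℕ} (hp : 0 < p) (hq : 0 < q) {s : F} (hs : s ≠ 0)
    (hs' : (s ^ 2) ^ (p * q) ≠ 1) :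
    torusDelta p q s = s⁻¹ ^ ((p - 1) * (q - 1)) *
      (qInt (p * q) (s ^ 2) / (qInt p (s ^ 2) * qInt q (s ^ 2))) := by
  have hexp : s⁻¹ ^ (p * q) * s⁻¹ = s⁻¹ ^ ((p - 1) * (q - 1)) * (s⁻¹ ^ p * s⁻¹ ^ q) := by
    rw [← pow_succ, ← pow_add, ← pow_add]
    congr 1
    zify [hp, hq]
    ring
  have hx : s ^ 2 - 1 ≠ 0 := fun h ↦ hs' (by rw [sub_eq_zero.1 h, one_pow])
  have hdiff := pow_sub_inv_pow hs 1
  rw [pow_one, pow_one, pow_one] at hdiff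
  rw [torusDelta, hdiff, pow_sub_inv_pow hs, pow_sub_inv_pow hs, pow_sub_inv_pow hs,
    mul_mul_mul_comm, hexp, mul_mul_mul_comm (s⁻¹ ^ p), ← qInt_mul_sub_one, ← qInt_mul_sub_one p,
    ← qInt_mul_sub_one q]
  field_simp

lemma torusPhi_eq {p q : ℕ} {s : F} (hs : s ≠ 0) (hs' : (s ^ 2) ^ (p * q) ≠ 1) :
    torusPhi p q s = 1 - q + 2 * (qIntSum q ((s ^ 2) ^ p) / qInt q ((s ^ 2) ^ p)) := by
  have hmonomial (n : ℕ) : s⁻¹ ^ n ≠ 0 := pow_ne_zero n (inv_ne_zero hs)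
  rw [torusPhi, pow_sub_inv_pow hs, pow_sub_inv_pow hs, pow_add_inv_pow hs, pow_add_inv_pow hs,
    mul_div_mul_left _ _ (hmonomial _), mul_div_mul_left _ _ (hmonomial _)]
  rw [pow_mul] at hs' ⊢
  set x := (s ^ 2) ^ p
  have hpow := qInt_mul_sub_one q x
  have hx : x - 1 ≠ 0 := fun h ↦ hs' (by rw [sub_eq_zero.1 h, one_pow])
  have hq := qInt_ne_zero_of_pow_ne_one dvd_rfl hs'
  rw [eq_add_of_sub_eq hpow.symm, add_sub_cancel_right]
  field_simp
  linear_combination -2 * qIntSum_mul_sub_one q x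

lemma torusPsi_eq {p q : ℕ} (hp : 0 < p) (hq : 0 < q) {s : F} (hs : s ≠ 0)
    (hs' : (s ^ 2) ^ (p * q) ≠ 1) :
    torusPsi p q s = s⁻¹ ^ ((p - 1) * (q - 1)) *
      (((1 - q) * qInt (p * q) (s ^ 2) + 2 * psiNumerator p q (s ^ 2)) /
        (qInt p (s ^ 2) * qInt q (s ^ 2))) := by
  rw [torusPsi, torusDelta_eq hp hq hs hs', torusPhi_eq hs hs', psiNumerator, qInt_mul]
  have hne : qInt q ((s ^ 2) ^ p) ≠ 0 :=
    qInt_ne_zero_of_pow_ne_one dvd_rfl (pow_mul (s ^ 2) p q ▸ hs')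
  field_simp

lemma torusTheta_eq_thetaNumerator (h2 : (2 : F) ≠ 0) {p q : ℕ} (hp : 0 < p) (hq : 0 < q)
    (hpq : p.Coprime q) {s₁ s₂ : F} (h₁ : s₁ ≠ 0) (h₂ : s₂ ≠ 0)
    (h₁' : (s₁ ^ 2) ^ (p * q) ≠ 1) (h₂' : (s₂ ^ 2) ^ (p * q) ≠ 1)
    (h₃' : ((s₁ * s₂) ^ 2) ^ (p * q) ≠ 1) :
    torusTheta p q s₁ s₂ (s₁ * s₂)⁻¹ =
      ((s₁ ^ 2)⁻¹ * (s₂ ^ 2)⁻¹) ^ ((p - 1) * (q - 1)) *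
        (thetaNumerator p q (s₁ ^ 2) (s₂ ^ 2) /
          (qIntTriple p (s₁ ^ 2) (s₂ ^ 2) * qIntTriple q (s₁ ^ 2) (s₂ ^ 2))) := by
  have hmonomial : (s₁ ^ 2)⁻¹ * (s₂ ^ 2)⁻¹ = s₁⁻¹ * s₂⁻¹ * (s₁ * s₂)⁻¹ := by
    rw [mul_inv, ← inv_pow, ← inv_pow]
    ring
  have hgenus : (torusGenus p q : F) = (p - 1) * (q - 1) / 2 := by
    rw [eq_div_iff h2, mul_comm, cast_two_mul_torusGenus hp hq hpq]
  have psi_eq {s : F} (hs : s ≠ 0) (hs' : (s ^ 2) ^ (p * q) ≠ 1) :=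
    torusPsi_eq hq hp hs (mul_comm p q ▸ hs')
  have h₃ := mul_ne_zero h₁ h₂
  simp only [torusTheta, torusPsi_inv, torusDelta_inv]
  rw [torusDelta_eq hp hq h₁ h₁', torusDelta_eq hp hq h₂ h₂', torusDelta_eq hp hq h₃ h₃',
    torusPsi_eq hp hq h₁ h₁', torusPsi_eq hp hq h₂ h₂', torusPsi_eq hp hq h₃ h₃',
    psi_eq h₁ h₁', psi_eq h₂ h₂', psi_eq h₃ h₃', hmonomial, mul_pow, mul_pow,
    thetaNumerator, qIntTriple, qIntTriple, hgenus, mul_comm q p, ← mul_pow s₁ s₂]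
  rw [show (4 : F) = 2 ^ 2 by norm_num]
  field_simp
  ring

lemma torusTheta_eq_aeval (h2 : (2 : F) ≠ 0) {p q : ℕ} (hp : 0 < p) (hq : 0 < q)
    (hpq : p.Coprime q) {W : MvPolynomial (Fin 2) ℤ}
    (hW : W * (qIntTriple p (.X 0) (.X 1) * qIntTriple q (.X 0) (.X 1)) =
      thetaNumerator p q (.X 0) (.X 1))
    {s₁ s₂ : F} (h₁ : s₁ ≠ 0) (h₂ : s₂ ≠ 0) (h₁' : (s₁ ^ 2) ^ (p * q) ≠ 1)
    (h₂' : (s₂ ^ 2) ^ (p * q) ≠ 1) (h₃' : ((s₁ * s₂) ^ 2) ^ (p * q) ≠ 1) :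
    torusTheta p q s₁ s₂ (s₁ * s₂)⁻¹ = ((s₁ ^ 2)⁻¹ * (s₂ ^ 2)⁻¹) ^ ((p - 1) * (q - 1)) *
      MvPolynomial.aeval ![s₁ ^ 2, s₂ ^ 2] W := by
  rw [torusTheta_eq_thetaNumerator h2 hp hq hpq h₁ h₂ h₁' h₂' h₃']
  rw [mul_pow s₁] at h₃'
  have heval := congrArg (MvPolynomial.aeval ![s₁ ^ 2, s₂ ^ 2]) hW
  simp only [map_mul, map_qIntTriple, map_thetaNumerator, MvPolynomial.aeval_X,
    Matrix.cons_val_zero, Matrix.cons_val_one] at heval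
  rw [← heval, mul_div_cancel_right₀]
  exact mul_ne_zero (qIntTriple_ne_zero_of_pow_ne_one (Nat.dvd_mul_right p q) h₁' h₂' h₃')
    (qIntTriple_ne_zero_of_pow_ne_one (Nat.dvd_mul_left q p) h₁' h₂' h₃')

lemma torusTheta_eq_aeval_inv (h2 : (2 : F) ≠ 0) {p q : ℕ} (hp : 0 < p) (hq : 0 < q)
    (hpq : p.Coprime q) {W : MvPolynomial (Fin 2) ℤ}
    (hW : W * (qIntTriple p (.X 0) (.X 1) * qIntTriple q (.X 0) (.X 1)) =
      thetaNumerator p q (.X 0) (.X 1))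
    {s₁ s₂ : F} (h₁ : s₁ ≠ 0) (h₂ : s₂ ≠ 0) (h₁' : (s₁ ^ 2) ^ (p * q) ≠ 1)
    (h₂' : (s₂ ^ 2) ^ (p * q) ≠ 1) (h₃' : ((s₁ * s₂) ^ 2) ^ (p * q) ≠ 1) :
    torusTheta p q s₁ s₂ (s₁ * s₂)⁻¹ = (s₁ ^ 2 * s₂ ^ 2) ^ ((p - 1) * (q - 1)) *
      MvPolynomial.aeval ![(s₁ ^ 2)⁻¹, (s₂ ^ 2)⁻¹] W := by
  have hinv {s : F} (hs : (s ^ 2) ^ (p * q) ≠ 1) : (s⁻¹ ^ 2) ^ (p * q) ≠ 1 := by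
    rwa [inv_pow, inv_pow, ne_eq, inv_eq_one]
  have h := torusTheta_eq_aeval h2 hp hq hpq hW (inv_ne_zero h₁) (inv_ne_zero h₂) (hinv h₁')
    (hinv h₂') (mul_inv s₁ s₂ ▸ hinv h₃')
  rw [← torusTheta_inv, mul_inv s₁]
  simpa only [inv_pow, inv_inv] using h

end Field

section Laurent

open MvPolynomial

/-- The coefficients of the Laurent polynomial `(t₁t₂)^d · W(t₁⁻¹, t₂⁻¹)`, indexed by the exponents
of `t₁` and `t₂`. -/
noncomputable def laurentReflect (d : ℤ) (W : MvPolynomial (Fin 2) ℤ) : ℤ × ℤ →₀ ℤ :=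
  (AddMonoidAlgebra.coeff W).mapDomain fun e ↦ (d - e 0, d - e 1)

lemma le_of_mem_support_laurentReflect {d : ℤ} {W : MvPolynomial (Fin 2) ℤ} {m : ℤ × ℤ}
    (hm : m ∈ (laurentReflect d W).support) : m.1 ≤ d := by
  obtain ⟨e, -, rfl⟩ := Finset.mem_image.1 (Finsupp.mapDomain_support hm)
  simp

lemma laurentReflect_apply_self (d : ℤ) (W : MvPolynomial (Fin 2) ℤ) :
    laurentReflect d W (d, d) = constantCoeff W := by
  have hinj : Function.Injective fun e : Fin 2 →₀ ℕ ↦ (d - e 0, d - e 1) := fun e e' h ↦ by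
    ext i
    fin_cases i <;> simp_all
  simpa [laurentReflect, constantCoeff_eq, coeff] using
    Finsupp.mapDomain_apply hinj (AddMonoidAlgebra.coeff W) 0

lemma mem_support_laurentReflect_self {d : ℤ} {W : MvPolynomial (Fin 2) ℤ}
    (hW : constantCoeff W ≠ 0) : (d, d) ∈ (laurentReflect d W).support := by
  rwa [Finsupp.mem_support_iff, laurentReflect_apply_self]

lemma sum_laurentReflect {F : Type*} [Field F] (d : ℕ) (W : MvPolynomial (Fin 2) ℤ) {x y : F}
    (hx : x ≠ 0) (hy : y ≠ 0) :
    ((laurentReflect d W).sum fun m a ↦ (a : F) * x ^ m.1 * y ^ m.2) =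
      (x * y) ^ d * aeval ![x⁻¹, y⁻¹] W := by
  rw [laurentReflect, Finsupp.sum_mapDomain_index (by simp) (by intros; push_cast; ring),
    aeval_def, eval₂_eq', Finset.mul_sum]
  refine Finset.sum_congr rfl fun e _ ↦ ?_
  simp only [Fin.prod_univ_two, Matrix.cons_val_zero, Matrix.cons_val_one, zpow_sub₀ hx,
    zpow_sub₀ hy, zpow_natCast, inv_pow, mul_pow, eq_intCast, coeff]
  ring

end Laurent

theorem torusTheta_degree_t1_general {p q : ℕ} (hp : 2 ≤ p) (hq : 2 ≤ q) (hpq : p.Coprime q) :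
    ∃ c : ℤ × ℤ →₀ ℤ,
      (∀ {F : Type*} [Field F] {s₁ s₂ : F}, (2 : F) ≠ 0 → s₁ ≠ 0 → s₂ ≠ 0 →
        (s₁ ^ 2) ^ (p * q) ≠ 1 → (s₂ ^ 2) ^ (p * q) ≠ 1 → ((s₁ * s₂) ^ 2) ^ (p * q) ≠ 1 →
        torusTheta p q s₁ s₂ (s₁ * s₂)⁻¹ =
          c.sum fun m a ↦ (a : F) * s₁ ^ (2 * m.1) * s₂ ^ (2 * m.2)) ∧
      (∀ m ∈ c.support, m.1 ≤ ((p : ℤ) - 1) * ((q : ℤ) - 1)) ∧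
      ∃ m ∈ c.support, m.1 = ((p : ℤ) - 1) * ((q : ℤ) - 1) := by
  have hp' : 0 < p := by omega
  have hq' : 0 < q := by omega
  obtain ⟨W, hW, hconst⟩ := exists_mul_qIntTriple_eq_thetaNumerator hp' hq' hpq
  have hW0 : MvPolynomial.constantCoeff W ≠ 0 := by
    rw [hconst, Nat.cast_ne_zero]
    exact (torusGenus_pos hp hq hpq).ne'
  rw [← Nat.cast_pred hp', ← Nat.cast_pred hq', ← Nat.cast_mul]
  refine ⟨_, ?_, fun m ↦ le_of_mem_support_laurentReflect, _,
    mem_support_laurentReflect_self hW0, rfl⟩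
  intro F _ s₁ s₂ h2 h₁ h₂ h₁' h₂' h₃'
  rw [torusTheta_eq_aeval_inv h2 hp' hq' hpq hW h₁ h₂ h₁' h₂' h₃',
    ← sum_laurentReflect _ W (pow_ne_zero 2 h₁) (pow_ne_zero 2 h₂)]
  simp only [zpow_mul, zpow_ofNat]

/-- For coprime integers `p, q ≥ 2`, the Laurent polynomial
`Θ_{p,q}(s₁, s₂, (s₁s₂)⁻¹) ∈ ℤ[t₁^{±1}, t₂^{±1}]` (where `t_i = s_i²`) has degree exactly
`(p−1)(q−1)` in `t₁`: it admits a (necessarily unique) representation as an integral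
Laurent-polynomial expression in `t₁ = s₁²`, `t₂ = s₂²` in which every occurring exponent
of `t₁` is at most `(p−1)(q−1)` and the exponent `(p−1)(q−1)` occurs with nonzero
coefficient. -/
theorem torusTheta_degree_t1 (p q : ℕ) (hp : 2 ≤ p) (hq : 2 ≤ q)
    (hpq : Nat.Coprime p q) :
    ∀ (s₁ s₂ : FractionRing (MvPolynomial (Fin 2) ℚ)),
      s₁ = algebraMap (MvPolynomial (Fin 2) ℚ) _ (MvPolynomial.X 0) →
      s₂ = algebraMap (MvPolynomial (Fin 2) ℚ) _ (MvPolynomial.X 1) →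
      ∃ c : ℤ × ℤ →₀ ℤ,
        torusTheta p q s₁ s₂ (s₁ * s₂)⁻¹ =
          c.sum (fun m a => (a : FractionRing (MvPolynomial (Fin 2) ℚ)) *
            s₁ ^ (2 * m.1) * s₂ ^ (2 * m.2)) ∧
        (∀ m ∈ c.support, m.1 ≤ ((p : ℤ) - 1) * ((q : ℤ) - 1)) ∧
        (∃ m ∈ c.support, m.1 = ((p : ℤ) - 1) * ((q : ℤ) - 1)) := by
  rintro _ _ rfl rfl
  obtain ⟨c, hc, hdegree⟩ := torusTheta_degree_t1_general hp hq hpq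
  have hpq0 : p * q ≠ 0 := by positivity
  refine ⟨c, hc two_ne_zero (by simp) (by simp) ?_ ?_ ?_, hdegree⟩ <;>
    simp only [← map_mul, ← map_pow] <;> rw [map_pow] <;>
    exact algebraMap_pow_ne_one (by simp) hpq0
end

section
/- Let p ≥ 3 be an odd integer. In ℚ(s₁, s₂), writing t₁ = s₁², t₂ = s₂², s₃ = (s₁s₂)^{−1} and t₃ = s₃², the following identity holds: Θ_{p,2}(s₁, s₂, s₃) = (1/((t₁+1)(t₂+1)(t₃+1))) · ( ((p−1)/2)·(t₁^p + t₁^{−p} + t₂^p + t₂^{−p} + t₃^p + t₃^{−p}) − (t₁^{p−1} − t₁^{−(p−1)})/(t₁ − t₁^{−1}) − (t₂^{p−1} − t₂^{−(p−1)})/(t₂ − t₂^{−1}) − (t₃^{p−1} − t₃^{−(p−1)})/(t₃ − t₃^{−1}) ). -/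
/-!
Write `u(s) = s + s⁻¹`, `c(s) = s ^ p + s ^ (-p)` and `d(s) = s ^ p - s ^ (-p)`. For `q = 2` the
factors of `Θ` collapse to `Δ_{p,2} = c / u` and `ψ_{p,2} = -d / u`. If `x y z = 1`, the addition
law `d(y) c(z) + d(z) c(y) = -2 d(x)` pairs the six terms of `Θ` into three, the one attached to
`x` being a multiple of `ψ_{2,p}(x) d(x)`. Up to the factor `1 / u`, the latter is a function of
`t = s ^ 2` alone, since `c d = t ^ p - t ^ (-p)` absorbs the denominator of `φ_{2,p}`. Up to powers
of `s`, every denominator occurring in `Δ` and `φ` divides a power of `s ^ (4 p) - 1`.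
-/

section TorusTwo

variable {F : Type*} [Field F] {p : ℕ} {s x y z : F}

lemma pow_ne_one_of_dvd {M : Type*} [Monoid M] {a : M} {m n : ℕ} (h : a ^ n ≠ 1) (hdvd : m ∣ n) :
    a ^ m ≠ 1 := by
  rw [ne_eq, ← orderOf_dvd_iff_pow_eq_one] at h ⊢
  exact fun hm ↦ h (hm.trans hdvd)

lemma pow_sub_inv_pow_ne_zero_of_dvd {m n : ℕ} (hs : s ≠ 0) (h : s ^ m ≠ 1) (hdvd : 2 * n ∣ m) :
    s ^ n - s⁻¹ ^ n ≠ 0 := by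
  intro hzero
  apply pow_ne_one_of_dvd h hdvd
  rw [two_mul, pow_add]
  nth_rw 1 [sub_eq_zero.mp hzero]
  rw [← mul_pow, inv_mul_cancel₀ hs, one_pow]

lemma pow_mul_two_sub_pow_mul_two {R : Type*} [CommRing R] (a b : R) (n : ℕ) :
    a ^ (n * 2) - b ^ (n * 2) = (a ^ n + b ^ n) * (a ^ n - b ^ n) := by
  rw [pow_mul, pow_mul, sq_sub_sq]

lemma pow_add_inv_pow_ne_zero_of_dvd {m n : ℕ} (hs : s ≠ 0) (h : s ^ m ≠ 1) (hdvd : 4 * n ∣ m) :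
    s ^ n + s⁻¹ ^ n ≠ 0 := by
  have hsub : s ^ (n * 2) - s⁻¹ ^ (n * 2) ≠ 0 :=
    pow_sub_inv_pow_ne_zero_of_dvd hs h (by convert hdvd using 1; ring)
  rw [pow_mul_two_sub_pow_mul_two] at hsub
  exact left_ne_zero_of_mul hsub

lemma pow_succ_sub_pow_succ_mul_add {R : Type*} [CommRing R] (a b : R) (n : ℕ) :
    (a ^ (n + 1) - b ^ (n + 1)) * (a + b) =
      (a ^ (n + 1) + b ^ (n + 1)) * (a - b) + 2 * (a * b) * (a ^ n - b ^ n) := by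
  ring

lemma pow_sub_inv_pow_mul_add_inv_div_sub_inv {t : F} (hp : p ≠ 0) (ht : t ≠ 0)
    (hsub : t - t⁻¹ ≠ 0) :
    (t ^ p - t⁻¹ ^ p) * ((t + t⁻¹) / (t - t⁻¹)) =
      t ^ p + t⁻¹ ^ p + 2 * ((t ^ (p - 1) - t⁻¹ ^ (p - 1)) / (t - t⁻¹)) := by
  obtain ⟨n, rfl⟩ := Nat.exists_eq_add_one_of_ne_zero hp
  have hmul := pow_succ_sub_pow_succ_mul_add t t⁻¹ n
  rw [mul_inv_cancel₀ ht, mul_one] at hmul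
  rw [mul_div_assoc', hmul, add_div, mul_div_cancel_right₀ _ hsub, Nat.add_sub_cancel,
    mul_div_assoc]

lemma sub_inv_mul_add_inv_add_swap {a b c : F} (habc : a * b * c = 1) :
    (b - b⁻¹) * (c + c⁻¹) + (c - c⁻¹) * (b + b⁻¹) = -2 * (a - a⁻¹) := by
  have hbc : b * c = a⁻¹ := eq_inv_of_mul_eq_one_right (by rw [← mul_assoc, habc])
  have hbc_inv : b⁻¹ * c⁻¹ = a := by rw [← mul_inv, hbc, inv_inv]
  linear_combination 2 * hbc - 2 * hbc_inv

lemma sq_add_one_mul_eq_add_inv_mul (hxyz : x * y * z = 1) :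
    (x ^ 2 + 1) * (y ^ 2 + 1) * (z ^ 2 + 1) = (x + x⁻¹) * (y + y⁻¹) * (z + z⁻¹) := by
  have hx : x ≠ 0 := by rintro rfl; simp at hxyz
  have hy : y ≠ 0 := by rintro rfl; simp at hxyz
  have hz : z ≠ 0 := by rintro rfl; simp at hxyz
  field_simp
  linear_combination (x ^ 2 + 1) * (y ^ 2 + 1) * (z ^ 2 + 1) * hxyz

lemma torusDelta_comm (p q : ℕ) (s : F) : torusDelta p q s = torusDelta q p s := by
  simp only [torusDelta, mul_comm p q, mul_comm (s ^ p - s⁻¹ ^ p)]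

lemma torusDelta_two (hs : s ≠ 0) (h : s ^ (2 * p) ≠ 1) :
    torusDelta p 2 s = (s ^ p + s⁻¹ ^ p) / (s + s⁻¹) := by
  have hd : s ^ p - s⁻¹ ^ p ≠ 0 := pow_sub_inv_pow_ne_zero_of_dvd hs h dvd_rfl
  have hd₁ : s - s⁻¹ ≠ 0 := by
    simpa using pow_sub_inv_pow_ne_zero_of_dvd (n := 1) hs h (by simp)
  calc torusDelta p 2 s
      = (s ^ p + s⁻¹ ^ p) * ((s ^ p - s⁻¹ ^ p) * (s - s⁻¹)) /
          ((s + s⁻¹) * ((s ^ p - s⁻¹ ^ p) * (s - s⁻¹))) := by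
        rw [torusDelta, pow_mul_two_sub_pow_mul_two, sq_sub_sq]
        congr 1 <;> ring
    _ = (s ^ p + s⁻¹ ^ p) / (s + s⁻¹) := mul_div_mul_right _ _ (mul_ne_zero hd hd₁)

lemma torusPhi_two (hs : s ≠ 0) (h : s ^ (4 * p) ≠ 1) :
    torusPhi p 2 s = -(s ^ p - s⁻¹ ^ p) / (s ^ p + s⁻¹ ^ p) := by
  have hc : s ^ p + s⁻¹ ^ p ≠ 0 := pow_add_inv_pow_ne_zero_of_dvd hs h dvd_rfl
  have hd : s ^ p - s⁻¹ ^ p ≠ 0 := pow_sub_inv_pow_ne_zero_of_dvd hs h ⟨2, by ring⟩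
  rw [torusPhi, pow_mul_two_sub_pow_mul_two, pow_mul, pow_mul]
  generalize s ^ p = a at *
  generalize s⁻¹ ^ p = b at *
  field_simp
  push_cast
  ring

lemma torusPsi_two (hs : s ≠ 0) (h : s ^ (4 * p) ≠ 1) :
    torusPsi p 2 s = -(s ^ p - s⁻¹ ^ p) / (s + s⁻¹) := by
  have hc : s ^ p + s⁻¹ ^ p ≠ 0 := pow_add_inv_pow_ne_zero_of_dvd hs h dvd_rfl
  have h₂ : s ^ (2 * p) ≠ 1 := pow_ne_one_of_dvd h ⟨2, by ring⟩
  rw [torusPsi, torusDelta_two hs h₂, torusPhi_two hs h, mul_comm, div_mul_div_cancel₀ hc]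

/-- The contribution of a single variable `t = s ^ 2` to the numerator of `Θ_{p,2}`, for `p ≥ 1`
(the subtraction `p - 1` in the exponents is truncated). -/
noncomputable def torusThetaTwoSummand (p : ℕ) (t : F) : F :=
  ((p : F) - 1) / 2 * (t ^ p + t⁻¹ ^ p) - (t ^ (p - 1) - t⁻¹ ^ (p - 1)) / (t - t⁻¹)

lemma torusPsi_two_left_mul_pow_sub_inv_pow [NeZero (2 : F)] (hs : s ≠ 0) (h : s ^ (4 * p) ≠ 1) :
    torusPsi 2 p s * (s ^ p - s⁻¹ ^ p) =
      -2 * torusThetaTwoSummand p (s ^ 2) / (s + s⁻¹) := by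
  have hp : p ≠ 0 := by rintro rfl; simp at h
  have h₂ : s ^ (2 * p) ≠ 1 := pow_ne_one_of_dvd h ⟨2, by ring⟩
  have hsub : s ^ 2 - (s ^ 2)⁻¹ ≠ 0 := by
    simpa only [inv_pow] using pow_sub_inv_pow_ne_zero_of_dvd (n := 2) hs h ⟨p, rfl⟩
  have hsubp : (s ^ 2) ^ p - (s ^ 2)⁻¹ ^ p ≠ 0 := by
    simpa only [← inv_pow, ← pow_mul] using
      pow_sub_inv_pow_ne_zero_of_dvd (n := 2 * p) hs h ⟨1, by ring⟩
  have hcd : (s ^ p + s⁻¹ ^ p) * (s ^ p - s⁻¹ ^ p) = (s ^ 2) ^ p - (s ^ 2)⁻¹ ^ p := by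
    rw [← pow_mul_two_sub_pow_mul_two, mul_comm p, pow_mul, pow_mul, inv_pow s 2]
  have hcoth := pow_sub_inv_pow_mul_add_inv_div_sub_inv hp (pow_ne_zero 2 hs) hsub
  rw [torusPsi, torusDelta_comm, torusDelta_two hs h₂, torusPhi, pow_mul, pow_mul, inv_pow s 2]
  set t := s ^ 2
  calc (s ^ p + s⁻¹ ^ p) / (s + s⁻¹) * ((t + t⁻¹) / (t - t⁻¹) -
          p * ((t ^ p + t⁻¹ ^ p) / (t ^ p - t⁻¹ ^ p))) * (s ^ p - s⁻¹ ^ p)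
      = ((s ^ p + s⁻¹ ^ p) * (s ^ p - s⁻¹ ^ p)) * ((t + t⁻¹) / (t - t⁻¹) -
          p * ((t ^ p + t⁻¹ ^ p) / (t ^ p - t⁻¹ ^ p))) / (s + s⁻¹) := by ring
    _ = ((t ^ p - t⁻¹ ^ p) * ((t + t⁻¹) / (t - t⁻¹)) - p * (t ^ p + t⁻¹ ^ p)) / (s + s⁻¹) := by
        rw [hcd, mul_sub, mul_left_comm, mul_div_cancel₀ _ hsubp]
    _ = -2 * torusThetaTwoSummand p t / (s + s⁻¹) := by
        rw [hcoth, torusThetaTwoSummand]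
        congr 1
        linear_combination ((p - 1) * (t ^ p + t⁻¹ ^ p)) * mul_inv_cancel₀ (two_ne_zero' F)

lemma torusTheta_eq_sum_torusPsi (p q : ℕ) (x y z : F) :
    torusTheta p q x y z =
      -(1 / 4) *
        (torusPsi q p x * (torusPsi p q y * torusDelta p q z + torusPsi p q z * torusDelta p q y) +
          torusPsi q p y * (torusPsi p q x * torusDelta p q z + torusPsi p q z * torusDelta p q x) +
          torusPsi q p z *
            (torusPsi p q x * torusDelta p q y + torusPsi p q y * torusDelta p q x)) := by
  rw [torusTheta]
  ring

lemma torusPsi_mul_torusDelta_add_swap (hxyz : x * y * z = 1) (hy : y ^ (4 * p) ≠ 1)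
    (hz : z ^ (4 * p) ≠ 1) :
    torusPsi p 2 y * torusDelta p 2 z + torusPsi p 2 z * torusDelta p 2 y =
      2 * (x ^ p - x⁻¹ ^ p) / ((y + y⁻¹) * (z + z⁻¹)) := by
  have hy₀ : y ≠ 0 := by rintro rfl; simp at hxyz
  have hz₀ : z ≠ 0 := by rintro rfl; simp at hxyz
  have hpow : x ^ p * y ^ p * z ^ p = 1 := by rw [← mul_pow, ← mul_pow, hxyz, one_pow]
  have hswap := sub_inv_mul_add_inv_add_swap hpow
  simp only [← inv_pow] at hswap
  rw [torusPsi_two hy₀ hy, torusPsi_two hz₀ hz,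
    torusDelta_two hy₀ (pow_ne_one_of_dvd hy ⟨2, by ring⟩),
    torusDelta_two hz₀ (pow_ne_one_of_dvd hz ⟨2, by ring⟩),
    div_mul_div_comm, div_mul_div_comm, mul_comm (z + z⁻¹), ← add_div]
  congr 1
  linear_combination -hswap

lemma torusPsi_two_left_mul_add_swap [NeZero (2 : F)] (hxyz : x * y * z = 1)
    (hx : x ^ (4 * p) ≠ 1) (hy : y ^ (4 * p) ≠ 1) (hz : z ^ (4 * p) ≠ 1) :
    torusPsi 2 p x *
        (torusPsi p 2 y * torusDelta p 2 z + torusPsi p 2 z * torusDelta p 2 y) =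
      -4 * torusThetaTwoSummand p (x ^ 2) / ((x + x⁻¹) * (y + y⁻¹) * (z + z⁻¹)) := by
  have hx₀ : x ≠ 0 := by rintro rfl; simp at hxyz
  calc _ = 2 * (torusPsi 2 p x * (x ^ p - x⁻¹ ^ p)) / ((y + y⁻¹) * (z + z⁻¹)) := by
        rw [torusPsi_mul_torusDelta_add_swap hxyz hy hz]
        ring
    _ = _ := by
        rw [torusPsi_two_left_mul_pow_sub_inv_pow hx₀ hx, mul_div_assoc', div_div,
          mul_assoc (x + x⁻¹)]
        ring

lemma torusTheta_two [NeZero (2 : F)] (hxyz : x * y * z = 1) (hx : x ^ (4 * p) ≠ 1)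
    (hy : y ^ (4 * p) ≠ 1) (hz : z ^ (4 * p) ≠ 1) :
    torusTheta p 2 x y z =
      (torusThetaTwoSummand p (x ^ 2) + torusThetaTwoSummand p (y ^ 2) +
        torusThetaTwoSummand p (z ^ 2)) / ((x + x⁻¹) * (y + y⁻¹) * (z + z⁻¹)) := by
  have hfour : (4 : F) ≠ 0 := by
    rw [show (4 : F) = 2 * 2 by norm_num]
    exact mul_ne_zero two_ne_zero two_ne_zero
  have hyxz : y * x * z = 1 := by rw [mul_comm y, hxyz]
  have hzxy : z * x * y = 1 := by rw [mul_assoc, mul_comm, hxyz]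
  have hpairx := torusPsi_two_left_mul_add_swap hxyz hx hy hz
  have hpairy := torusPsi_two_left_mul_add_swap hyxz hy hx hz
  have hpairz := torusPsi_two_left_mul_add_swap hzxy hz hx hy
  set E := torusThetaTwoSummand (F := F) p
  calc torusTheta p 2 x y z
      = -(1 / 4) * (-4 * E (x ^ 2) / ((x + x⁻¹) * (y + y⁻¹) * (z + z⁻¹)) +
          -4 * E (y ^ 2) / ((y + y⁻¹) * (x + x⁻¹) * (z + z⁻¹)) +
          -4 * E (z ^ 2) / ((z + z⁻¹) * (x + x⁻¹) * (y + y⁻¹))) := by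
        rw [torusTheta_eq_sum_torusPsi, hpairx, hpairy, hpairz]
    _ = (E (x ^ 2) + E (y ^ 2) + E (z ^ 2)) / ((x + x⁻¹) * (y + y⁻¹) * (z + z⁻¹)) := by
        rw [mul_comm (y + y⁻¹) (x + x⁻¹), mul_assoc (z + z⁻¹), mul_comm (z + z⁻¹)]
        field_simp
        ring

theorem torusTheta_p2_formula_general [NeZero (2 : F)] (hxyz : x * y * z = 1)
    (hx : x ^ (4 * p) ≠ 1) (hy : y ^ (4 * p) ≠ 1) (hz : z ^ (4 * p) ≠ 1) :
    torusTheta p 2 x y z =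
      (1 / ((x ^ 2 + 1) * (y ^ 2 + 1) * (z ^ 2 + 1))) *
        ((((p : F) - 1) / 2) *
            ((x ^ 2) ^ p + (x ^ 2)⁻¹ ^ p + (y ^ 2) ^ p + (y ^ 2)⁻¹ ^ p +
              (z ^ 2) ^ p + (z ^ 2)⁻¹ ^ p) -
          ((x ^ 2) ^ (p - 1) - (x ^ 2)⁻¹ ^ (p - 1)) / (x ^ 2 - (x ^ 2)⁻¹) -
          ((y ^ 2) ^ (p - 1) - (y ^ 2)⁻¹ ^ (p - 1)) / (y ^ 2 - (y ^ 2)⁻¹) -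
          ((z ^ 2) ^ (p - 1) - (z ^ 2)⁻¹ ^ (p - 1)) / (z ^ 2 - (z ^ 2)⁻¹)) := by
  rw [torusTheta_two hxyz hx hy hz, sq_add_one_mul_eq_add_inv_mul hxyz]
  simp only [torusThetaTwoSummand]
  ring

end TorusTwo

lemma algebraMap_pow_ne_one_of_not_isUnit {R A : Type*} [CommSemiring R] [Semiring A]
    [Algebra R A] [FaithfulSMul R A] {r : R} (hr : ¬IsUnit r) {n : ℕ} (hn : n ≠ 0) :
    algebraMap R A r ^ n ≠ 1 := by
  rw [← map_pow, ne_eq, FaithfulSMul.algebraMap_eq_one_iff]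
  exact fun hpow ↦ hr (IsUnit.of_pow_eq_one hpow hn)

/-- Example: the 2-loop polynomial of the `(p,2)` torus knot, for odd `p ≥ 3`.
In `ℚ(s₁,s₂)`, with `t_i = s_i²` and `s₃ = (s₁s₂)⁻¹`,
`Θ_{p,2}(s₁,s₂,s₃) = (1/((t₁+1)(t₂+1)(t₃+1))) · ( ((p−1)/2)·(t₁^p + t₁^{−p} + t₂^p + t₂^{−p}
  + t₃^p + t₃^{−p}) − Σᵢ (tᵢ^{p−1} − tᵢ^{−(p−1)})/(tᵢ − tᵢ⁻¹) )`. -/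
theorem torusTheta_p2_formula (p : ℕ) (hp : 3 ≤ p) (hodd : Odd p) :
    ∀ s₁ s₂ : FractionRing (MvPolynomial (Fin 2) ℚ),
      s₁ = algebraMap (MvPolynomial (Fin 2) ℚ) _ (MvPolynomial.X 0) →
      s₂ = algebraMap (MvPolynomial (Fin 2) ℚ) _ (MvPolynomial.X 1) →
      ∀ s₃ t₁ t₂ t₃ : FractionRing (MvPolynomial (Fin 2) ℚ),
        s₃ = (s₁ * s₂)⁻¹ → t₁ = s₁ ^ 2 → t₂ = s₂ ^ 2 → t₃ = s₃ ^ 2 →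
        torusTheta p 2 s₁ s₂ s₃ =
          (1 / ((t₁ + 1) * (t₂ + 1) * (t₃ + 1))) *
            ((((p : FractionRing (MvPolynomial (Fin 2) ℚ)) - 1) / 2) *
                (t₁ ^ p + t₁⁻¹ ^ p + t₂ ^ p + t₂⁻¹ ^ p + t₃ ^ p + t₃⁻¹ ^ p) -
              (t₁ ^ (p - 1) - t₁⁻¹ ^ (p - 1)) / (t₁ - t₁⁻¹) -
              (t₂ ^ (p - 1) - t₂⁻¹ ^ (p - 1)) / (t₂ - t₂⁻¹) -
              (t₃ ^ (p - 1) - t₃⁻¹ ^ (p - 1)) / (t₃ - t₃⁻¹)) := by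
  rintro _ _ rfl rfl _ _ _ _ rfl rfl rfl rfl
  have hn : 4 * p ≠ 0 := by omega
  exact torusTheta_p2_formula_general (mul_inv_cancel₀ (by simp))
    (algebraMap_pow_ne_one_of_not_isUnit MvPolynomial.X_prime.not_isUnit hn)
    (algebraMap_pow_ne_one_of_not_isUnit MvPolynomial.X_prime.not_isUnit hn)
    (by rw [inv_pow, inv_ne_one, ← map_mul]
        exact algebraMap_pow_ne_one_of_not_isUnit
          (mt isUnit_of_mul_isUnit_left MvPolynomial.X_prime.not_isUnit) hn)
end
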